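/- arXiv:2309.07565 — 14 statements merged into one kernel-verified Lean document; each statement's English description precedes it below -/
import Mathlib

section
/- Let α, β, d, t, p, q ∈ ℝ with p ≥ 0. If L_q(S_p(L_t(0,0,α))) = (d, 0, β), then p = sqrt(2 + d² − 2·cos(α − β) + 2d·(sin α − sin β)). (Length of the straight segment of an LSL Dubins path.) -/
open Real

/-- Left-turn operator: arc of length `v` along the unit left-turning circle. -/
noncomputable def Lop (v : ℝ) : ℝ × ℝ × ℝ → ℝ × ℝ × ℝ :=
  fun c => (c.1 + Real.sin (c.2.2 + v) - Real.sin c.2.2,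
            c.2.1 - Real.cos (c.2.2 + v) + Real.cos c.2.2,
            c.2.2 + v)

/-- Right-turn operator: arc of length `v` along the unit right-turning circle. -/
noncomputable def Rop (v : ℝ) : ℝ × ℝ × ℝ → ℝ × ℝ × ℝ :=
  fun c => (c.1 - Real.sin (c.2.2 - v) + Real.sin c.2.2,
            c.2.1 + Real.cos (c.2.2 - v) - Real.cos c.2.2,
            c.2.2 - v)

/-- Straight-motion operator: straight segment of length `v`. -/
noncomputable def Sop (v : ℝ) : ℝ × ℝ × ℝ → ℝ × ℝ × ℝ :=
  fun c => (c.1 + v * Real.cos c.2.2, c.2.1 + v * Real.sin c.2.2, c.2.2)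

theorem lsl_straight_length (α β d t p q : ℝ) (hp : 0 ≤ p)
    (h : Lop q (Sop p (Lop t (0, 0, α))) = (d, 0, β)) :
    p = Real.sqrt (2 + d ^ 2 - 2 * Real.cos (α - β) + 2 * d * (Real.sin α - Real.sin β)) := by
  simp only [Lop, Sop, Prod.mk.injEq] at h
  obtain ⟨h1, h2, h3⟩ := h
  rw [h3] at h1 h2
  have e1 : p * Real.cos (α + t) = d + Real.sin α - Real.sin β := by linarith
  have e2 : p * Real.sin (α + t) = Real.cos β - Real.cos α := by linarith
  have key : 2 + d ^ 2 - 2 * Real.cos (α - β) + 2 * d * (Real.sin α - Real.sin β) = p ^ 2 := by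
    have e3 : p ^ 2 = (p * Real.cos (α + t)) ^ 2 + (p * Real.sin (α + t)) ^ 2 := by
      linear_combination (-p ^ 2) * Real.sin_sq_add_cos_sq (α + t)
    rw [e3, e1, e2, Real.cos_sub]
    linear_combination (-1) * Real.sin_sq_add_cos_sq α - Real.sin_sq_add_cos_sq β
  rw [key, Real.sqrt_sq hp]
end

section
/- Let α, β, d, t, p, q ∈ ℝ with p ≥ 0. If R_q(S_p(R_t(0,0,α))) = (d, 0, β), then p = sqrt(2 + d² − 2·cos(α − β) − 2d·(sin α − sin β)). (Length of the straight segment of an RSR Dubins path.) -/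
open Real

theorem rsr_straight_length (α β d t p q : ℝ) (hp : 0 ≤ p)
    (h : Rop q (Sop p (Rop t (0, 0, α))) = (d, 0, β)) :
    p = Real.sqrt (2 + d ^ 2 - 2 * Real.cos (α - β) - 2 * d * (Real.sin α - Real.sin β)) := by
  simp only [Rop, Sop, Prod.mk.injEq] at h
  obtain ⟨h1, h2, h3⟩ := h
  rw [h3] at h1 h2
  have e1 : p * Real.cos (α - t) = d + Real.sin β - Real.sin α := by linarith
  have e2 : p * Real.sin (α - t) = Real.cos α - Real.cos β := by linarith
  have e : 2 + d ^ 2 - 2 * Real.cos (α - β) - 2 * d * (Real.sin α - Real.sin β) = p ^ 2 := by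
    have : p ^ 2 = (p * Real.cos (α - t)) ^ 2 + (p * Real.sin (α - t)) ^ 2 := by
      linear_combination (-p ^ 2) * Real.sin_sq_add_cos_sq (α - t)
    rw [this, e1, e2, Real.cos_sub]
    linear_combination -Real.sin_sq_add_cos_sq α - Real.sin_sq_add_cos_sq β
  rw [e, Real.sqrt_sq hp]
end

section
/- Let α, β, d, t, p, q ∈ ℝ with p ≥ 0. If R_q(S_p(L_t(0,0,α))) = (d, 0, β) (an LSR Dubins path: first a left arc of length t, then a straight segment of length p, then a right arc of length q), then p = sqrt(−2 + d² + 2·cos(α − β) + 2d·(sin α + sin β)). -/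
open Real

theorem lsr_straight_length (α β d t p q : ℝ) (hp : 0 ≤ p)
    (h : Rop q (Sop p (Lop t (0, 0, α))) = (d, 0, β)) :
    p = Real.sqrt (-2 + d ^ 2 + 2 * Real.cos (α - β) + 2 * d * (Real.sin α + Real.sin β)) := by
  simp only [Rop, Sop, Lop, Prod.mk.injEq] at h
  obtain ⟨h1, h2, h3⟩ := h
  rw [h3] at h1 h2
  have e1 : p * Real.cos (α + t) + 2 * Real.sin (α + t) = d + Real.sin α + Real.sin β := by
    linarith
  have e2 : p * Real.sin (α + t) - 2 * Real.cos (α + t) = -(Real.cos α + Real.cos β) := by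
    linarith
  have key : p ^ 2 + 4 = (d + Real.sin α + Real.sin β) ^ 2 + (Real.cos α + Real.cos β) ^ 2 := by
    rw [← neg_sq (Real.cos α + Real.cos β), ← e1, ← e2]
    linear_combination (-(p ^ 2 + 4)) * Real.sin_sq_add_cos_sq (α + t)
  have e : -2 + d ^ 2 + 2 * Real.cos (α - β) + 2 * d * (Real.sin α + Real.sin β) = p ^ 2 := by
    rw [Real.cos_sub]
    linear_combination -key - Real.sin_sq_add_cos_sq α - Real.sin_sq_add_cos_sq β
  rw [e, Real.sqrt_sq hp]
end

section
/- Let α, β, d, t, p, q ∈ ℝ with p ≥ 0. If L_q(S_p(R_t(0,0,α))) = (d, 0, β) (an RSL Dubins path: first a right arc of length t, then a straight segment of length p, then a left arc of length q), then p = sqrt(−2 + d² + 2·cos(α − β) − 2d·(sin α + sin β)). -/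
open Real

theorem rsl_straight_length (α β d t p q : ℝ) (hp : 0 ≤ p)
    (h : Lop q (Sop p (Rop t (0, 0, α))) = (d, 0, β)) :
    p = Real.sqrt (-2 + d ^ 2 + 2 * Real.cos (α - β) - 2 * d * (Real.sin α + Real.sin β)) := by
  simp only [Lop, Sop, Rop, Prod.mk.injEq] at h
  obtain ⟨hx, hy, hb⟩ := h
  rw [hb] at hx hy
  have hA : p * Real.cos (α - t) - 2 * Real.sin (α - t) = d - Real.sin α - Real.sin β := by
    linarith
  have hB : p * Real.sin (α - t) + 2 * Real.cos (α - t) = Real.cos α + Real.cos β := by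
    linarith
  have h1 := Real.sin_sq_add_cos_sq (α - t)
  have h2 := Real.sin_sq_add_cos_sq α
  have h3 := Real.sin_sq_add_cos_sq β
  have key : -2 + d ^ 2 + 2 * Real.cos (α - β) - 2 * d * (Real.sin α + Real.sin β) = p ^ 2 := by
    rw [Real.cos_sub]
    generalize Real.sin (α - t) = s at *
    generalize Real.cos (α - t) = c at *
    have e : (p * c - 2 * s) ^ 2 + (p * s + 2 * c) ^ 2 = (p ^ 2 + 4) * (s ^ 2 + c ^ 2) := by ring
    rw [hA, hB, h1] at e
    linarith
  rw [key, Real.sqrt_sq hp]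
end

section
/- Let α, β, d, t, p, q ∈ ℝ. If R_q(L_p(R_t(0,0,α))) = (d, 0, β) (an RLR Dubins path), then cos p = (6 − d² + 2·cos(α − β) + 2d·(sin α − sin β)) / 8. (The middle-arc length of an RLR path satisfies this cosine identity.) -/
open Real

theorem rlr_middle_arc_cos (α β d t p q : ℝ)
    (h : Rop q (Lop p (Rop t (0, 0, α))) = (d, 0, β)) :
    Real.cos p = (6 - d ^ 2 + 2 * Real.cos (α - β) + 2 * d * (Real.sin α - Real.sin β)) / 8 := by
  simp only [Rop, Lop, Prod.mk.injEq] at h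
  obtain ⟨h1, h2, h3⟩ := h
  rw [h3] at h1 h2
  have hp : Real.cos p = Real.cos (α - t + p) * Real.cos (α - t)
      + Real.sin (α - t + p) * Real.sin (α - t) := by
    rw [← Real.cos_sub]; congr 1; ring
  rw [hp, Real.cos_sub α β]
  have e1 := Real.sin_sq_add_cos_sq (α - t)
  have e2 := Real.sin_sq_add_cos_sq (α - t + p)
  have e3 := Real.sin_sq_add_cos_sq α
  have e4 := Real.sin_sq_add_cos_sq β
  generalize Real.sin (α - t + p) = sb at *
  generalize Real.cos (α - t + p) = cb at *
  generalize Real.sin (α - t) = sa at *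
  generalize Real.cos (α - t) = ca at *
  have f1 : d - Real.sin α + Real.sin β = 2 * (sb - sa) := by linarith
  have f2 : Real.cos α - Real.cos β = 2 * (ca - cb) := by linarith
  have g1 := congrArg (· ^ 2) f1
  have g2 := congrArg (· ^ 2) f2
  linarith
end

section
/- Let α, β, d, t, p, q ∈ ℝ. If L_q(R_p(L_t(0,0,α))) = (d, 0, β) (an LRL Dubins path), then cos p = (6 − d² + 2·cos(α − β) − 2d·(sin α − sin β)) / 8. (The middle-arc length of an LRL path satisfies this cosine identity.) -/
open Real

theorem lrl_middle_arc_cos (α β d t p q : ℝ)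
    (h : Lop q (Rop p (Lop t (0, 0, α))) = (d, 0, β)) :
    Real.cos p = (6 - d ^ 2 + 2 * Real.cos (α - β) - 2 * d * (Real.sin α - Real.sin β)) / 8 := by
  simp only [Lop, Rop, Prod.mk.injEq] at h
  obtain ⟨h1, h2, h3⟩ := h
  rw [h3] at h1 h2
  have hp : Real.cos p = Real.cos ((α + t) - (α + t - p)) := by congr 1; ring
  rw [hp, Real.cos_sub (α + t) (α + t - p), Real.cos_sub α β]
  generalize α + t - p = b at *
  generalize α + t = a at *
  have e1 : d = 2 * (Real.sin a - Real.sin b) - Real.sin α + Real.sin β := by linarith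
  have e2 : 2 * (Real.cos a - Real.cos b) = Real.cos α - Real.cos β := by linarith
  have e3 : (2 * (Real.cos a - Real.cos b)) ^ 2 = (Real.cos α - Real.cos β) ^ 2 := by rw [e2]
  rw [e1]
  linarith [Real.sin_sq_add_cos_sq a, Real.sin_sq_add_cos_sq b, Real.sin_sq_add_cos_sq α,
    Real.sin_sq_add_cos_sq β]
end

section
/- Reflection equivalence for LSR paths: let α, β, d, t, p, q ∈ ℝ. If R_q(S_p(L_t(0,0,α))) = (d, 0, β), then L_q(S_p(R_t(0,0,−α))) = (d, 0, −β). (An LSR path for orientation pair (α, β) yields a topologically equivalent RSL path with the same segment lengths for the pair (−α, −β).) -/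
open Real

theorem lsr_reflection_equiv (α β d t p q : ℝ)
    (h : Rop q (Sop p (Lop t (0, 0, α))) = (d, 0, β)) :
    Lop q (Sop p (Rop t (0, 0, -α))) = (d, 0, -β) := by
  simp only [Lop, Rop, Sop, Prod.mk.injEq] at h ⊢
  obtain ⟨h1, h2, h3⟩ := h
  have e1 : -α - t = -(α + t) := by ring
  have e2 : -(α + t) + q = -(α + t - q) := by ring
  rw [e1, e2]
  simp only [Real.sin_neg, Real.cos_neg]
  refine ⟨?_, ?_, ?_⟩ <;> linarith
end

section
/- Reversal equivalence for LSL paths: let α, β, d, t, p, q ∈ ℝ. If L_q(S_p(L_t(0,0,α))) = (d, 0, β), then R_t(S_p(R_q(0,0,β))) = (d, 0, α). (An LSL path with initial/final segment lengths (t, q) for orientation pair (α, β) yields a topologically equivalent RSR path with segment lengths (q, t) for the pair (β, α).) -/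
open Real

theorem lsl_reversal_equiv (α β d t p q : ℝ)
    (h : Lop q (Sop p (Lop t (0, 0, α))) = (d, 0, β)) :
    Rop t (Sop p (Rop q (0, 0, β))) = (d, 0, α) := by
  simp only [Lop, Sop, Prod.mk.injEq] at h
  obtain ⟨h1, h2, h3⟩ := h
  have e1 : β - q = α + t := by linarith
  have e2 : α + t - t = α := by ring
  rw [h3] at h1 h2
  simp only [Rop, Sop, Prod.mk.injEq, e1, e2]
  refine ⟨by linarith, by linarith, trivial⟩
end

section
/- Reversal equivalence for LSR paths: let α, β, d, t, p, q ∈ ℝ. If R_q(S_p(L_t(0,0,α))) = (d, 0, β), then R_t(S_p(L_q(0,0,β))) = (d, 0, α). (An LSR path with initial/final segment lengths (t, q) for orientation pair (α, β) yields a topologically equivalent LSR path with segment lengths (q, t) for the pair (β, α).) -/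
open Real

theorem lsr_reversal_equiv (α β d t p q : ℝ)
    (h : Rop q (Sop p (Lop t (0, 0, α))) = (d, 0, β)) :
    Rop t (Sop p (Lop q (0, 0, β))) = (d, 0, α) := by
  simp only [Rop, Sop, Lop, Prod.mk.injEq] at h ⊢
  obtain ⟨h1, h2, h3⟩ := h
  have e1 : β + q = α + t := by linarith
  have e2 : α + t - t = α := by ring
  rw [h3] at h1 h2
  rw [e1, e2]
  exact ⟨by linarith, by linarith, rfl⟩
end

section
/- Reversal equivalence for RLR paths: let α, β, d, t, p, q ∈ ℝ. If R_q(L_p(R_t(0,0,α))) = (d, 0, β), then L_t(R_p(L_q(0,0,β))) = (d, 0, α). (An RLR path with initial/final segment lengths (t, q) for orientation pair (α, β) yields a topologically equivalent LRL path with segment lengths (q, t) for the pair (β, α).) -/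
open Real

theorem rlr_reversal_equiv (α β d t p q : ℝ)
    (h : Rop q (Lop p (Rop t (0, 0, α))) = (d, 0, β)) :
    Lop t (Rop p (Lop q (0, 0, β))) = (d, 0, α) := by
  simp only [Rop, Lop, Prod.mk.injEq] at h ⊢
  obtain ⟨h1, h2, h3⟩ := h
  have e1 : β + q = α - t + p := by linarith
  have e2 : α - t + p - p = α - t := by ring
  have e3 : α - t + t = α := by ring
  rw [h3] at h1 h2
  rw [e1, e2, e3]
  refine ⟨?_, ?_, rfl⟩ <;> linarith
end

section
/- Monotonicity of the LSL path length in the initial orientation: fix β ∈ [0, π/2] and d > 0. The function 𝓛_lsl(α) = −α + β + sqrt((d + sin α − sin β)² + (cos α − cos β)²) is monotone nonincreasing in α on the interval [0, π/2]. -/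
open Real

theorem lsl_length_antitone (β d : ℝ) (hβ : β ∈ Set.Icc 0 (Real.pi / 2)) (hd : 0 < d) :
    AntitoneOn
      (fun α => -α + β +
        Real.sqrt ((d + Real.sin α - Real.sin β) ^ 2 + (Real.cos α - Real.cos β) ^ 2))
      (Set.Icc 0 (Real.pi / 2)) := by
  intro a _ b _ hab
  simp only
  have key : (Real.sin b - Real.sin a) ^ 2 + (Real.cos b - Real.cos a) ^ 2 ≤ (b - a) ^ 2 := by
    have h1 := Real.one_sub_sq_div_two_le_cos (x := b - a)
    rw [Real.cos_sub] at h1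
    nlinarith [Real.sin_sq_add_cos_sq a, Real.sin_sq_add_cos_sq b]
  obtain ⟨x, hx⟩ : ∃ x, x = d + Real.sin a - Real.sin β := ⟨_, rfl⟩
  obtain ⟨y, hy⟩ : ∃ y, y = Real.cos a - Real.cos β := ⟨_, rfl⟩
  obtain ⟨u, hu⟩ : ∃ u, u = Real.sin b - Real.sin a := ⟨_, rfl⟩
  obtain ⟨v, hv⟩ : ∃ v, v = Real.cos b - Real.cos a := ⟨_, rfl⟩
  have e1 : d + Real.sin b - Real.sin β = x + u := by rw [hx, hu]; ring
  have e2 : Real.cos b - Real.cos β = y + v := by rw [hy, hv]; ring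
  rw [e1, e2, ← hx, ← hy]
  rw [← hu, ← hv] at key
  have hs := Real.sqrt_nonneg (x ^ 2 + y ^ 2)
  have hs2 := Real.sq_sqrt (show 0 ≤ x ^ 2 + y ^ 2 by positivity)
  set s := Real.sqrt (x ^ 2 + y ^ 2)
  have ht : 0 ≤ b - a := sub_nonneg.2 hab
  have hc : x * u + y * v ≤ s * (b - a) := by
    refine (le_abs_self _).trans (abs_le_of_sq_le_sq ?_ (mul_nonneg hs ht))
    calc (x * u + y * v) ^ 2 ≤ (x ^ 2 + y ^ 2) * (u ^ 2 + v ^ 2) := by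
          nlinarith [sq_nonneg (x * v - y * u)]
      _ ≤ (x ^ 2 + y ^ 2) * (b - a) ^ 2 := by gcongr
      _ = (s * (b - a)) ^ 2 := by rw [mul_pow, hs2]
  have hfin : Real.sqrt ((x + u) ^ 2 + (y + v) ^ 2) ≤ s + (b - a) := by
    refine Real.sqrt_le_iff.2 ⟨by linarith, ?_⟩
    nlinarith
  linarith
end

section
/- Monotonicity of the RSR path length in the initial orientation: fix β ∈ [0, π/2] and d > 0. The function 𝓛_rsr(α) = α − β + sqrt((d − sin α + sin β)² + (cos α − cos β)²) is monotone nondecreasing in α on the interval [0, π/2]. -/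
open Real

theorem rsr_length_monotone (β d : ℝ) (hβ : β ∈ Set.Icc 0 (Real.pi / 2)) (hd : 0 < d) :
    MonotoneOn
      (fun α => α - β +
        Real.sqrt ((d - Real.sin α + Real.sin β) ^ 2 + (Real.cos α - Real.cos β) ^ 2))
      (Set.Icc 0 (Real.pi / 2)) := by
  intro a _ b _ hab
  have key : ∀ u v p q t : ℝ, 0 ≤ t → p ^ 2 + q ^ 2 ≤ t ^ 2 →
      Real.sqrt ((u + p) ^ 2 + (v + q) ^ 2) ≤ t + Real.sqrt (u ^ 2 + v ^ 2) := by
    intro u v p q t ht h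
    have hS := Real.sqrt_nonneg (u ^ 2 + v ^ 2)
    have hS2 := Real.sq_sqrt (show 0 ≤ u ^ 2 + v ^ 2 by positivity)
    set S := Real.sqrt (u ^ 2 + v ^ 2)
    have h1 : u * p + v * q ≤ S * t := by
      refine abs_le_of_sq_le_sq' ?_ (mul_nonneg hS ht) |>.2
      have h2 : S ^ 2 * (p ^ 2 + q ^ 2) ≤ S ^ 2 * t ^ 2 :=
        mul_le_mul_of_nonneg_left h (sq_nonneg S)
      rw [hS2] at h2
      rw [mul_pow, hS2]
      nlinarith [sq_nonneg (u * q - v * p)]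
    apply Real.sqrt_le_iff.mpr
    constructor
    · positivity
    · nlinarith
  have hc := Real.one_sub_sq_div_two_le_cos (x := b - a)
  rw [Real.cos_sub] at hc
  have := key (d - Real.sin b + Real.sin β) (Real.cos b - Real.cos β)
    (Real.sin b - Real.sin a) (Real.cos a - Real.cos b) (b - a) (by linarith)
    (by nlinarith [Real.sin_sq_add_cos_sq a, Real.sin_sq_add_cos_sq b])
  have e1 : d - Real.sin b + Real.sin β + (Real.sin b - Real.sin a)
    = d - Real.sin a + Real.sin β := by ring
  have e2 : Real.cos b - Real.cos β + (Real.cos a - Real.cos b)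
    = Real.cos a - Real.cos β := by ring
  rw [e1, e2] at this
  show a - β + _ ≤ b - β + _
  linarith
end

section
/- Comparison of RSR and LSL path lengths in class a₁₁: let 0 ≤ α < β ≤ π/2 and d ≥ 0. Then α − β + sqrt((d − sin α + sin β)² + (cos α − cos β)²) < −α + β + sqrt((d + sin α − sin β)² + (cos α − cos β)²), i.e. 𝓛_rsr < 𝓛_lsl. -/
open Real

theorem rsr_lt_lsl_a11 (α β d : ℝ) (hα : 0 ≤ α) (hαβ : α < β) (hβ : β ≤ Real.pi / 2)
    (hd : 0 ≤ d) :
    α - β + Real.sqrt ((d - Real.sin α + Real.sin β) ^ 2 + (Real.cos α - Real.cos β) ^ 2) <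
      -α + β + Real.sqrt ((d + Real.sin α - Real.sin β) ^ 2 + (Real.cos α - Real.cos β) ^ 2) := by
  have hs0 : 0 < Real.sin β - Real.sin α :=
    sub_pos.mpr (Real.sin_lt_sin_of_lt_of_le_pi_div_two (by linarith [Real.pi_pos]) hβ hαβ)
  have hs1 : Real.sin β - Real.sin α < β - α := by
    rw [Real.sin_sub_sin]
    have h1 : Real.sin ((β - α) / 2) < (β - α) / 2 := Real.sin_lt (by linarith)
    have h2 : 0 ≤ Real.sin ((β - α) / 2) :=
      Real.sin_nonneg_of_nonneg_of_le_pi (by linarith) (by linarith [Real.pi_pos])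
    have h3 := Real.cos_le_one ((β + α) / 2)
    nlinarith
  have hB : d - (Real.sin β - Real.sin α) ≤
      Real.sqrt ((d + Real.sin α - Real.sin β) ^ 2 + (Real.cos α - Real.cos β) ^ 2) := by
    apply Real.le_sqrt_of_sq_le
    nlinarith [sq_nonneg (Real.cos α - Real.cos β)]
  have hB0 := Real.sqrt_nonneg
    ((d + Real.sin α - Real.sin β) ^ 2 + (Real.cos α - Real.cos β) ^ 2)
  have hBs := Real.sq_sqrt (show 0 ≤ (d + Real.sin α - Real.sin β) ^ 2 +
    (Real.cos α - Real.cos β) ^ 2 by positivity)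
  have key : Real.sqrt ((d - Real.sin α + Real.sin β) ^ 2 + (Real.cos α - Real.cos β) ^ 2) ≤
      Real.sqrt ((d + Real.sin α - Real.sin β) ^ 2 + (Real.cos α - Real.cos β) ^ 2) +
        2 * (Real.sin β - Real.sin α) := by
    apply Real.sqrt_le_iff.mpr
    refine ⟨by linarith, ?_⟩
    nlinarith [mul_le_mul_of_nonneg_left hB hs0.le]
  linarith
end

section
/- Comparison of RLR and LRL path lengths in class a₁₁ for the short path case: let 0 ≤ α < β ≤ π/2 and 0 < d with d < sin α + sin β + sqrt(4 − (cos α + cos β)²). Set A_r = (6 − d² + 2·cos(α − β) + 2d·(sin α − sin β))/8 and A_l = (6 − d² + 2·cos(α − β) − 2d·(sin α − sin β))/8, and assume −1 ≤ A_r and −1 ≤ A_l. Then α − β + 2·arccos(A_r) < −α + β + 2·arccos(A_l), i.e. 𝓛_rlr < 𝓛_lrl. -/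
open Real

lemma arccos_sub_lt_aux (x y δ : ℝ) (hx : -1 ≤ x) (hxy : x ≤ y) (hy : y ≤ 1)
    (h0 : 0 ≤ δ)
    (h : cos δ < x * y ∨ 0 < 1 - x ^ 2 - y ^ 2 + 2 * cos δ * (x * y) - cos δ ^ 2) :
    arccos x - arccos y < δ := by
  by_contra hc
  push Not at hc
  have h2 : arccos x - arccos y ≤ π := by
    have := arccos_le_pi x
    have := arccos_nonneg y
    linarith
  have h3 := cos_le_cos_of_nonneg_of_le_pi h0 h2 hc
  rw [cos_sub, cos_arccos hx (by linarith), cos_arccos (by linarith) hy, sin_arccos,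
    sin_arccos, ← sqrt_mul (by nlinarith)] at h3
  rcases h with h | h
  · have := sqrt_nonneg ((1 - x ^ 2) * (1 - y ^ 2))
    linarith
  · have : cos δ - x * y < √((1 - x ^ 2) * (1 - y ^ 2)) := by
      apply lt_sqrt_of_sq_lt
      nlinarith
    linarith

lemma core_aux (d s k c S : ℝ) (hd : 0 < d) (hs : 0 < s) (hk : 0 < k) (hc : 0 ≤ c) (hS : 0 < S)
    (h1 : s ^ 2 + k ^ 2 = 1) (h2 : S ^ 2 + c ^ 2 = 1)
    (hshort : d < 2 * S * k + √(4 - (2 * c * k) ^ 2)) (x y C : ℝ)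
    (hC : C = 2 * k ^ 2 - 1)
    (hx : x = (4 + 4 * k ^ 2 - d ^ 2) / 8 - d * c * s / 2)
    (hy : y = (4 + 4 * k ^ 2 - d ^ 2) / 8 + d * c * s / 2) :
    C < x * y ∨ 0 < 1 - x ^ 2 - y ^ 2 + 2 * C * (x * y) - C ^ 2 := by
  have hk2 : k ^ 2 = 1 - s ^ 2 := by linarith
  have hc2 : c ^ 2 = 1 - S ^ 2 := by linarith
  have hup : d ^ 2 < 4 * s ^ 2 + 4 * k * S * d := by
    have hrad : 4 - (2 * c * k) ^ 2 = 4 * s ^ 2 + 4 * S ^ 2 * k ^ 2 := by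
      have : (2 * c * k) ^ 2 = 4 * c ^ 2 * k ^ 2 := by ring
      rw [this, hc2, hk2]; ring
    rw [hrad] at hshort
    have hSk : 0 < S * k := mul_pos hS hk
    by_cases hle : d ≤ 2 * S * k
    · nlinarith [mul_pos hd hSk, sq_nonneg s]
    · have h4 : d - 2 * S * k < √(4 * s ^ 2 + 4 * S ^ 2 * k ^ 2) := by linarith
      have h5 := (lt_sqrt (by linarith)).1 h4
      nlinarith
  set u := (4 + 4 * k ^ 2 - d ^ 2) / 8 with hu
  have hD : 1 - x ^ 2 - y ^ 2 + 2 * C * (x * y) - C ^ 2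
      = 4 * s ^ 2 * (k ^ 2 - u ^ 2 - d ^ 2 * c ^ 2 * k ^ 2 / 4) := by
    rw [hx, hy, hC]
    have : s ^ 2 = 1 - k ^ 2 := by linarith
    ring_nf
    rw [this]
    ring
  have hxy : x * y = u ^ 2 - d ^ 2 * c ^ 2 * s ^ 2 / 4 := by rw [hx, hy]; ring
  have hs2 : 0 < 4 * s ^ 2 := by positivity
  rcases lt_or_ge d (2 * s) with hds | hds
  · by_cases hlt : C < x * y
    · exact Or.inl hlt
    · right
      rw [hD]
      apply mul_pos hs2
      rw [hxy, hC] at hlt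
      push Not at hlt
      have e : d ^ 2 * c ^ 2 * k ^ 2 / 4 = d ^ 2 * c ^ 2 / 4 - d ^ 2 * c ^ 2 * s ^ 2 / 4 := by
        rw [hk2]; ring
      have hd2 : d ^ 2 < 4 * s ^ 2 := by nlinarith
      have : d ^ 2 * c ^ 2 ≤ d ^ 2 * 1 := by
        apply mul_le_mul_of_nonneg_left _ (sq_nonneg d)
        nlinarith [sq_nonneg S]
      linarith
  · right
    rw [hD]
    apply mul_pos hs2
    have e : k ^ 2 - u ^ 2 - d ^ 2 * c ^ 2 * k ^ 2 / 4
        = (4 * k * S * d - (d ^ 2 - 4 * s ^ 2)) * (4 * k * S * d + (d ^ 2 - 4 * s ^ 2)) / 64 := by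
      have : s ^ 2 = 1 - k ^ 2 := by linarith
      rw [hu, hc2, this]
      ring
    rw [e]
    have hp : 0 < k * S * d := by positivity
    have hd2 : 4 * s ^ 2 ≤ d ^ 2 := by nlinarith
    apply div_pos _ (by norm_num)
    apply mul_pos <;> linarith

theorem rlr_lt_lrl_a11_short (α β d : ℝ) (hα : 0 ≤ α) (hαβ : α < β) (hβ : β ≤ Real.pi / 2)
    (hd : 0 < d)
    (hshort : d < Real.sin α + Real.sin β + Real.sqrt (4 - (Real.cos α + Real.cos β) ^ 2))
    (hAr : -1 ≤ (6 - d ^ 2 + 2 * Real.cos (α - β) + 2 * d * (Real.sin α - Real.sin β)) / 8)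
    (hAl : -1 ≤ (6 - d ^ 2 + 2 * Real.cos (α - β) - 2 * d * (Real.sin α - Real.sin β)) / 8) :
    α - β + 2 * Real.arccos
        ((6 - d ^ 2 + 2 * Real.cos (α - β) + 2 * d * (Real.sin α - Real.sin β)) / 8) <
      -α + β + 2 * Real.arccos
        ((6 - d ^ 2 + 2 * Real.cos (α - β) - 2 * d * (Real.sin α - Real.sin β)) / 8) := by
  obtain ⟨m, hm⟩ : ∃ m, m = (α + β) / 2 := ⟨_, rfl⟩
  obtain ⟨t, ht⟩ : ∃ t, t = (β - α) / 2 := ⟨_, rfl⟩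
  have ea : α = m - t := by rw [hm, ht]; ring
  have eb : β = m + t := by rw [hm, ht]; ring
  have hpi := Real.pi_pos
  have hs : 0 < sin t := sin_pos_of_pos_of_lt_pi (by linarith) (by linarith)
  have hk : 0 < cos t := cos_pos_of_mem_Ioo ⟨by linarith, by linarith⟩
  have hc : 0 < cos m := cos_pos_of_mem_Ioo ⟨by linarith, by linarith⟩
  have hS : 0 < sin m := sin_pos_of_pos_of_lt_pi (by linarith) (by linarith)
  have h1 := sin_sq_add_cos_sq t
  have h2 := sin_sq_add_cos_sq m
  have e1 : sin α + sin β = 2 * sin m * cos t := by rw [ea, eb, sin_sub, sin_add]; ring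
  have e2 : cos α + cos β = 2 * cos m * cos t := by rw [ea, eb, cos_sub, cos_add]; ring
  have e3 : sin α - sin β = -(2 * cos m * sin t) := by rw [ea, eb, sin_sub, sin_add]; ring
  have e4' : cos (β - α) = 2 * cos t ^ 2 - 1 := by
    rw [← cos_two_mul]; congr 1; rw [ht]; ring
  have e4 : cos (α - β) = 2 * cos t ^ 2 - 1 := by
    rw [← e4', ← cos_neg]; congr 1; ring
  rw [e1, e2] at hshort
  rw [e3, e4] at hAr hAl ⊢
  have key := core_aux d (sin t) (cos t) (cos m) (sin m) hd hs hk hc.le hS h1 h2 hshort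
    ((6 - d ^ 2 + 2 * (2 * cos t ^ 2 - 1) + 2 * d * -(2 * cos m * sin t)) / 8)
    ((6 - d ^ 2 + 2 * (2 * cos t ^ 2 - 1) - 2 * d * -(2 * cos m * sin t)) / 8)
    (cos (β - α)) e4' (by ring) (by ring)
  have hp : 0 < d * (cos m * sin t) := by positivity
  have := arccos_sub_lt_aux _ _ (β - α) hAr (by linarith)
    (by nlinarith [sq_nonneg (d - 2 * cos m * sin t), mul_nonneg (sq_nonneg (sin m)) (sq_nonneg (sin t))])
    (by linarith) key
  linarith
end
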